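/- For all integers n ≥ 2 and k ≥ 1, ||R_{k,n} − C_{k,n}|| = Σ_{t=1}^{n−2} (B_{t+1}/k^t)·( (n)_t/t! + (n−1)_t/(t+1)! ) + (n+1)·B_n/k^{n−1}. -/

import Mathlib

/-- Number of descents of a permutation of `{1,...,n}` (here `Fin n`, 0-indexed):
the number of positions `i` with `1 ≤ i ≤ n-1` and `π(i) > π(i+1)`. -/
def numDescents (n : ℕ) (π : Equiv.Perm (Fin n)) : ℕ :=
  ((Finset.range (n - 1)).filter (fun i =>
    ∃ h : i + 1 < n, π ⟨i + 1, h⟩ < π ⟨i, Nat.lt_of_succ_lt h⟩)).card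

/-- `π` has a cyclic descent at `n` if `π(n) > π(1)`. -/
def hasCyclicDescentAtLast (n : ℕ) (π : Equiv.Perm (Fin n)) : Prop :=
  ∃ h : 0 < n, π ⟨0, h⟩ < π ⟨n - 1, Nat.sub_lt h Nat.one_pos⟩

instance (n : ℕ) (π : Equiv.Perm (Fin n)) : Decidable (hasCyclicDescentAtLast n π) :=
  exists_prop_decidable _

/-- Number of cyclic descents: `d(π)+1` if `π` has a cyclic descent at `n`, else `d(π)`. -/
def numCyclicDescents (n : ℕ) (π : Equiv.Perm (Fin n)) : ℕ :=
  numDescents n π + if hasCyclicDescentAtLast n π then 1 else 0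

/-- The k-riffle shuffle measure `R_{k,n}(π) = binom(n+k-d(π)-1, n) / k^n`. -/
noncomputable def riffle (k n : ℕ) (π : Equiv.Perm (Fin n)) : ℝ :=
  (Nat.choose (n + k - numDescents n π - 1) n : ℝ) / (k : ℝ) ^ n

/-- The cut-then-k-riffle-shuffle measure
`C_{k,n}(π) = binom(n+k-cd(π)-1, n-1) / (n·k^(n-1))`. -/
noncomputable def cutRiffle (k n : ℕ) (π : Equiv.Perm (Fin n)) : ℝ :=
  (Nat.choose (n + k - numCyclicDescents n π - 1) (n - 1) : ℝ) / ((n : ℝ) * (k : ℝ) ^ (n - 1))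

/-- cyclic descent count -/
def cycD (m : ℕ) (π : Equiv.Perm (Fin (m + 1))) : ℕ :=
  ∑ i : Fin (m + 1), if π (i + 1) < π i then 1 else 0

lemma numDescents_succ (m : ℕ) (π : Equiv.Perm (Fin (m + 1))) :
    numDescents (m + 1) π = ∑ i : Fin m, if π i.succ < π i.castSucc then 1 else 0 := by
  unfold numDescents
  rw [Finset.card_filter, Nat.add_sub_cancel, Finset.sum_range]
  refine Finset.sum_congr rfl fun i _ => ?_
  have : (∃ h : (i : ℕ) + 1 < m + 1, π ⟨i + 1, h⟩ < π ⟨i, Nat.lt_of_succ_lt h⟩)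
      ↔ π i.succ < π i.castSucc :=
    ⟨fun ⟨_, h⟩ => h, fun h => ⟨Nat.succ_lt_succ i.2, h⟩⟩
  simp only [this]

lemma cyc_iff (m : ℕ) (π : Equiv.Perm (Fin (m + 1))) :
    hasCyclicDescentAtLast (m + 1) π ↔ π (Fin.last m + 1) < π (Fin.last m) := by
  rw [Fin.last_add_one]
  exact ⟨fun ⟨_, h⟩ => h, fun h => ⟨Nat.succ_pos m, h⟩⟩

lemma cycD_eq (m : ℕ) (π : Equiv.Perm (Fin (m + 1))) :
    cycD m π = numDescents (m + 1) π
      + if π (Fin.last m + 1) < π (Fin.last m) then 1 else 0 := by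
  unfold cycD
  rw [Fin.sum_univ_castSucc, numDescents_succ]
  simp only [Fin.coeSucc_eq_succ]

lemma numCyc_eq (m : ℕ) (π : Equiv.Perm (Fin (m + 1))) :
    numCyclicDescents (m + 1) π = cycD m π := by
  unfold numCyclicDescents
  rw [cycD_eq]
  simp only [cyc_iff]

lemma cycD_le (m : ℕ) (π : Equiv.Perm (Fin (m + 1))) : cycD m π ≤ m := by
  unfold cycD
  rw [← Finset.card_filter]
  have : (Finset.univ.filter fun i => π (i + 1) < π i) ⊆ Finset.univ.erase (π.symm 0) := by
    intro i hi
    simp only [Finset.mem_filter, Finset.mem_univ, true_and] at hi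
    simp only [Finset.mem_erase, Finset.mem_univ, and_true]
    rintro rfl
    simp at hi
  have h := Finset.card_le_card this
  rw [Finset.card_erase_of_mem (Finset.mem_univ _)] at h
  simpa using h

lemma cycD_rot (m : ℕ) (π : Equiv.Perm (Fin (m + 1))) (j : Fin (m + 1)) :
    cycD m (π * Equiv.addRight j) = cycD m π := by
  unfold cycD
  refine Fintype.sum_equiv (Equiv.addRight j) _ _ fun i => ?_
  change (if π (i + 1 + j) < π (i + j) then 1 else 0) = if π (i + j + 1) < π (i + j) then 1 else 0
  rw [add_right_comm i 1 j]

lemma rot_sum (m : ℕ) (f : ℕ → ℝ) :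
    ((m : ℝ) + 1) * ∑ π : Equiv.Perm (Fin (m + 1)),
        (if π (Fin.last m + 1) < π (Fin.last m) then f (cycD m π) else 0)
      = ∑ π : Equiv.Perm (Fin (m + 1)), (cycD m π : ℝ) * f (cycD m π) := by
  have h1 : ∀ i : Fin (m + 1), ∑ π : Equiv.Perm (Fin (m + 1)),
      (if π (i + 1) < π i then f (cycD m π) else 0)
      = ∑ π : Equiv.Perm (Fin (m + 1)),
        (if π (Fin.last m + 1) < π (Fin.last m) then f (cycD m π) else 0) := by
    intro i
    refine Fintype.sum_equiv (Equiv.mulRight (Equiv.addRight (i - Fin.last m))) _ _ fun π => ?_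
    simp only [Equiv.coe_mulRight, cycD_rot, Equiv.Perm.mul_apply, Equiv.coe_addRight]
    rw [add_right_comm, add_sub_cancel]
  have h2 : ∑ i : Fin (m + 1), ∑ π : Equiv.Perm (Fin (m + 1)),
      (if π (i + 1) < π i then f (cycD m π) else 0)
      = ∑ π : Equiv.Perm (Fin (m + 1)), (cycD m π : ℝ) * f (cycD m π) := by
    rw [Finset.sum_comm]
    refine Finset.sum_congr rfl fun π _ => ?_
    have hD : (cycD m π : ℝ) = ∑ i : Fin (m + 1), if π (i + 1) < π i then (1 : ℝ) else 0 := by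
      unfold cycD
      rw [Nat.cast_sum]
      simp only [Nat.cast_ite, Nat.cast_one, Nat.cast_zero]
    rw [hD, Finset.sum_mul]
    refine Finset.sum_congr rfl fun i _ => ?_
    split_ifs <;> simp
  rw [← h2, Finset.sum_congr rfl fun i _ => h1 i]
  simp

lemma rep_sum (m : ℕ) (f : ℕ → ℝ) :
    ∑ π : Equiv.Perm (Fin (m + 2)), f (cycD (m + 1) π)
      = ((m : ℝ) + 2) * ∑ σ : Equiv.Perm (Fin (m + 1)), f (numDescents (m + 1) σ + 1) := by
  have h1 : ∀ i : Fin (m + 2), ∑ π : Equiv.Perm (Fin (m + 2)),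
      (if π i = 0 then f (cycD (m + 1) π) else 0)
      = ∑ π : Equiv.Perm (Fin (m + 2)), (if π 0 = 0 then f (cycD (m + 1) π) else 0) := by
    intro i
    refine Fintype.sum_equiv (Equiv.mulRight (Equiv.addRight i)) _ _ fun π => ?_
    simp only [Equiv.coe_mulRight, cycD_rot, Equiv.Perm.mul_apply, Equiv.coe_addRight, zero_add]
  have h2 : ∑ i : Fin (m + 2), ∑ π : Equiv.Perm (Fin (m + 2)),
      (if π i = 0 then f (cycD (m + 1) π) else 0)
      = ∑ π : Equiv.Perm (Fin (m + 2)), f (cycD (m + 1) π) := by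
    rw [Finset.sum_comm]
    refine Finset.sum_congr rfl fun π _ => ?_
    rw [Finset.sum_eq_single (π.symm 0)]
    · simp
    · intro b _ hb
      rw [if_neg]
      intro h
      exact hb (by rw [← h]; simp)
    · simp
  have h3 : ∑ π : Equiv.Perm (Fin (m + 2)), (if π 0 = 0 then f (cycD (m + 1) π) else 0)
      = ∑ σ : Equiv.Perm (Fin (m + 1)), f (numDescents (m + 1) σ + 1) := by
    rw [← Equiv.sum_comp (Equiv.Perm.decomposeFin (n := m + 1)).symm, Fintype.sum_prod_type,
      Finset.sum_eq_single 0]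
    · refine Finset.sum_congr rfl fun σ _ => ?_
      rw [Equiv.Perm.decomposeFin_symm_apply_zero, if_pos rfl]
      congr 1
      rw [cycD_eq, numDescents_succ, numDescents_succ, Fin.last_add_one, if_pos, Fin.sum_univ_succ,
        if_neg]
      · simp only [Fin.castSucc_succ, Equiv.Perm.decomposeFin_symm_apply_succ]
        simp
      · simp
      · rw [← Fin.succ_last, Equiv.Perm.decomposeFin_symm_apply_succ]
        simp
    · intro p _ hp
      simp [hp]
    · simp
  rw [← h2, Finset.sum_congr rfl fun i _ => h1 i, h3]
  simp

lemma choose_rec (N m : ℕ) :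
    ((N + 1).choose m : ℝ) * ((N : ℝ) + 1 - m) = (N.choose m : ℝ) * ((N : ℝ) + 1) := by
  rcases le_or_gt m (N + 1) with h | h
  · have := Nat.choose_mul_succ_eq N m
    have h' : ((N + 1 - m : ℕ) : ℝ) = (N : ℝ) + 1 - m := by
      rw [Nat.cast_sub h]; push_cast; ring
    rw [← h']
    exact_mod_cast this.symm
  · rw [Nat.choose_eq_zero_of_lt h, Nat.choose_eq_zero_of_lt (by omega)]; simp

/-- the cyclic weight -/
noncomputable def bb (m k c : ℕ) : ℝ := ((k + (m - c)).choose m : ℝ)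

lemma bb_rec (m k c : ℕ) (h : c ≤ m) :
    bb m (k + 1) c * ((k : ℝ) + 1 - c) = bb m k c * ((k : ℝ) + 1 + m - c) := by
  have := choose_rec (k + (m - c)) m
  rw [show k + (m - c) + 1 = k + 1 + (m - c) by ring] at this
  push_cast [Nat.cast_sub h] at this
  unfold bb
  linear_combination this

lemma bb_zero (m c : ℕ) (hc : c ≤ m) : bb m 0 c * (c : ℝ) = 0 := by
  unfold bb
  rcases Nat.eq_zero_or_pos c with rfl | h
  · simp
  · rw [Nat.choose_eq_zero_of_lt (by omega)]; simp

lemma bb_nonneg (m k c : ℕ) : 0 ≤ bb m k c := Nat.cast_nonneg _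

lemma riffle_val (m k : ℕ) (π : Equiv.Perm (Fin (m + 1))) :
    ((m : ℝ) + 1) * ((m + 1 + k - numDescents (m + 1) π - 1).choose (m + 1) : ℝ)
      = bb m k (cycD m π) * ((k : ℝ) - cycD m π)
        + (if π (Fin.last m + 1) < π (Fin.last m)
            then ((m : ℝ) + 1) * bb m k (cycD m π) else 0) := by
  have hle := cycD_le m π
  have hd := cycD_eq m π
  split_ifs at hd ⊢ with h
  · rw [show m + 1 + k - numDescents (m + 1) π - 1 = k + (m - cycD m π) + 1 by omega]
    have := Nat.add_one_mul_choose_eq (k + (m - cycD m π)) m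
    have h' : ((k : ℝ) + (m - cycD m π) + 1) * bb m k (cycD m π)
        = ((k + (m - cycD m π) + 1).choose (m + 1) : ℝ) * (m + 1) := by
      unfold bb
      rw [← Nat.cast_sub hle]
      exact_mod_cast this
    linear_combination -h'
  · rw [show m + 1 + k - numDescents (m + 1) π - 1 = k + (m - cycD m π) by omega]
    have := Nat.choose_succ_right_eq (k + (m - cycD m π)) m
    have h' : ((k + (m - cycD m π)).choose (m + 1) : ℝ) * (m + 1)
        = bb m k (cycD m π) * ((k : ℝ) - cycD m π) := by
      unfold bb
      rcases le_or_gt (cycD m π) k with hk | hk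
      · rw [show k + (m - cycD m π) - m = k - cycD m π by omega] at this
        rw [← Nat.cast_sub hk]
        exact_mod_cast this
      · rw [Nat.choose_eq_zero_of_lt (show k + (m - cycD m π) < m by omega),
          Nat.choose_eq_zero_of_lt (show k + (m - cycD m π) < m + 1 by omega)]
        simp
    linear_combination h'

lemma numDescents_le (m : ℕ) (π : Equiv.Perm (Fin (m + 1))) : numDescents (m + 1) π ≤ m :=
  (Nat.le_add_right _ _).trans ((cycD_eq m π).symm.le.trans (cycD_le m π))

lemma bbsum_of (m k : ℕ)
    (ih : ∑ σ : Equiv.Perm (Fin (m + 1)),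
      ((m + 1 + k - numDescents (m + 1) σ - 1).choose (m + 1) : ℝ) = (k : ℝ) ^ (m + 1)) :
    ∑ π : Equiv.Perm (Fin (m + 2)), bb (m + 1) k (cycD (m + 1) π)
      = ((m : ℝ) + 2) * (k : ℝ) ^ (m + 1) := by
  rw [rep_sum m (bb (m + 1) k), ← ih]
  congr 1
  refine Finset.sum_congr rfl fun σ _ => ?_
  have := numDescents_le m σ
  unfold bb
  rw [show m + 1 + k - numDescents (m + 1) σ - 1
    = k + (m + 1 - (numDescents (m + 1) σ + 1)) by omega]

lemma worpitzky (m k : ℕ) :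
    ∑ σ : Equiv.Perm (Fin (m + 1)),
      ((m + 1 + k - numDescents (m + 1) σ - 1).choose (m + 1) : ℝ) = (k : ℝ) ^ (m + 1) := by
  induction m with
  | zero =>
    have : ∀ σ : Equiv.Perm (Fin 1), numDescents 1 σ = 0 := fun σ =>
      Nat.le_zero.mp (numDescents_le 0 σ)
    simp [this]
  | succ m ih =>
    have h1 := bbsum_of m k ih
    have h2 : (((m + 1 : ℕ) : ℝ) + 1) * ∑ σ : Equiv.Perm (Fin (m + 2)),
        ((m + 1 + 1 + k - numDescents (m + 1 + 1) σ - 1).choose (m + 1 + 1) : ℝ)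
        = (k : ℝ) * ∑ π : Equiv.Perm (Fin (m + 2)), bb (m + 1) k (cycD (m + 1) π) := by
      rw [Finset.mul_sum, Finset.sum_congr rfl fun π _ => riffle_val (m + 1) k π,
        Finset.sum_add_distrib]
      have h3 := rot_sum (m + 1) (bb (m + 1) k)
      rw [Finset.mul_sum] at h3
      simp only [mul_ite, mul_zero] at h3
      rw [h3, ← Finset.sum_add_distrib, Finset.mul_sum]
      refine Finset.sum_congr rfl fun π _ => ?_
      ring
    rw [h1] at h2
    have h4 : ((m : ℝ) + 2) ≠ 0 := by positivity
    apply mul_left_cancel₀ h4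
    push_cast at h2
    rw [show (m : ℝ) + 2 = m + 1 + 1 by ring]
    rw [h2]
    ring

lemma bbsum (m k : ℕ) :
    ∑ π : Equiv.Perm (Fin (m + 2)), bb (m + 1) k (cycD (m + 1) π)
      = ((m : ℝ) + 2) * (k : ℝ) ^ (m + 1) := bbsum_of m k (worpitzky m k)

lemma S0 (m c k : ℕ) (hc : c ≤ m) :
    ((m : ℝ) + 1) * ∑ j ∈ Finset.range k, bb m j c = bb m k c * ((k : ℝ) - c) := by
  induction k with
  | zero => have := bb_zero m c hc; simp; simpa using this
  | succ k ih =>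
    rw [Finset.sum_range_succ, mul_add, ih]
    have := bb_rec m k c hc
    push_cast
    linear_combination -this

lemma S1 (m c k : ℕ) (hc : c ≤ m) :
    ((m : ℝ) + 1) * (m + 2) * ∑ j ∈ Finset.range k, (j : ℝ) * bb m j c
      = bb m k c * ((k : ℝ) - c) * ((m + 1) * k - (m + 1) + c) := by
  induction k with
  | zero =>
    have := bb_zero m c hc
    simp only [Finset.range_zero, Finset.sum_empty, Nat.cast_zero]
    linear_combination (-(m : ℝ) - 1 + c) * this
  | succ k ih =>
    rw [Finset.sum_range_succ, mul_add, ih]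
    have := bb_rec m k c hc
    push_cast
    linear_combination -(((m : ℝ) + 1) * k + c) * this

lemma perc (m c k : ℕ) (hc : c ≤ m) :
    (c : ℝ) * (m + 1 - c) * bb m k c = (m + 1) * k * bb m k c - k ^ 2 * bb m k c
      + (m + 1) * (m + 2) * (∑ j ∈ Finset.range k, (j : ℝ) * bb m j c)
      - (m + 1) * m * k * ∑ j ∈ Finset.range k, bb m j c := by
  have h0 := S0 m c k hc
  have h1 := S1 m c k hc
  linear_combination (m : ℝ) * k * h0 - h1

lemma wsum (m k : ℕ) :
    ∑ π : Equiv.Perm (Fin (m + 2)), (cycD (m + 1) π : ℝ) * (m + 2 - cycD (m + 1) π)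
        * bb (m + 1) k (cycD (m + 1) π)
      = (m + 2) * ((m + 2) * (k : ℝ) ^ (m + 2) - (k : ℝ) ^ (m + 3)
        + (m + 2) * (m + 3) * (∑ j ∈ Finset.range k, (j : ℝ) ^ (m + 2))
        - (m + 2) * (m + 1) * k * ∑ j ∈ Finset.range k, (j : ℝ) ^ (m + 1)) := by
  have h : ∀ π : Equiv.Perm (Fin (m + 2)), (cycD (m + 1) π : ℝ) * (m + 2 - cycD (m + 1) π)
        * bb (m + 1) k (cycD (m + 1) π) = _ := fun π =>
    Eq.trans (by push_cast; ring) (perc (m + 1) (cycD (m + 1) π) k (cycD_le _ π))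
  rw [Finset.sum_congr rfl fun π _ => h π]
  rw [Finset.sum_sub_distrib, Finset.sum_add_distrib, Finset.sum_sub_distrib,
    ← Finset.mul_sum, ← Finset.mul_sum, ← Finset.mul_sum, ← Finset.mul_sum, bbsum,
    Finset.sum_comm, Finset.sum_comm (s := Finset.univ)]
  simp only [← Finset.mul_sum, bbsum]
  have e1 : ∑ j ∈ Finset.range k, (j : ℝ) * (((m : ℝ) + 2) * (j : ℝ) ^ (m + 1))
      = (m + 2) * ∑ j ∈ Finset.range k, (j : ℝ) ^ (m + 2) := by
    rw [Finset.mul_sum]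
    exact Finset.sum_congr rfl fun j _ => by ring
  rw [e1]
  push_cast
  ring

lemma abs_val (m k : ℕ) (hk : 1 ≤ k) (π : Equiv.Perm (Fin (m + 2))) :
    |riffle k (m + 2) π - cutRiffle k (m + 2) π|
      = (1 / ((m + 2) * (k : ℝ) ^ (m + 2))) * ((cycD (m + 1) π : ℝ) * bb (m + 1) k (cycD (m + 1) π)
        + (if π (Fin.last (m + 1) + 1) < π (Fin.last (m + 1))
            then (fun c : ℕ => ((m : ℝ) + 2 - 2 * c) * bb (m + 1) k c) (cycD (m + 1) π) else 0)) := by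
  have hk' : (k : ℝ) ≠ 0 := by positivity
  have hv := riffle_val (m + 1) k π
  have hle := cycD_le (m + 1) π
  have hle' : (cycD (m + 1) π : ℝ) ≤ m + 1 := by exact_mod_cast hle
  have hb := bb_nonneg (m + 1) k (cycD (m + 1) π)
  have hc : cutRiffle k (m + 2) π
      = bb (m + 1) k (cycD (m + 1) π) * k / ((m + 2) * (k : ℝ) ^ (m + 2)) := by
    unfold cutRiffle bb
    rw [numCyc_eq, show m + 2 + k - cycD (m + 1) π - 1 = k + (m + 1 - cycD (m + 1) π) by omega]
    simp only [show m + 2 - 1 = m + 1 from rfl]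
    push_cast
    field_simp
    ring
  have hr : riffle k (m + 2) π = (((m + 1 : ℕ) : ℝ) + 1) *
      ((m + 1 + 1 + k - numDescents (m + 1 + 1) π - 1).choose (m + 1 + 1) : ℝ)
        / ((m + 2) * (k : ℝ) ^ (m + 2)) := by
    unfold riffle
    push_cast
    rw [show (m : ℝ) + 1 + 1 = m + 2 by ring]
    field_simp
  rw [hr, hc, hv, ← sub_div]
  have hpos : 0 < ((m : ℝ) + 2) * (k : ℝ) ^ (m + 2) := by positivity
  rw [abs_div, abs_of_pos hpos, div_eq_inv_mul, one_div]
  congr 1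
  split_ifs
  · rw [abs_of_nonneg]
    · push_cast; ring
    · push_cast
      have : 0 ≤ bb (m + 1) k (cycD (m + 1) π) * ((m : ℝ) + 2 - cycD (m + 1) π) :=
        mul_nonneg hb (by linarith)
      linarith
  · have : 0 ≤ bb (m + 1) k (cycD (m + 1) π) * (cycD (m + 1) π : ℝ) :=
      mul_nonneg hb (Nat.cast_nonneg _)
    rw [abs_of_nonpos]
    · ring
    · linarith

lemma tv_val (m k : ℕ) (hk : 1 ≤ k) :
    (1 / 2) * ∑ π : Equiv.Perm (Fin (m + 2)), |riffle k (m + 2) π - cutRiffle k (m + 2) π|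
      = (1 / ((m + 2) * (k : ℝ) ^ (m + 2))) *
        ((m + 2) * (k : ℝ) ^ (m + 2) - (k : ℝ) ^ (m + 3)
        + (m + 2) * (m + 3) * (∑ j ∈ Finset.range k, (j : ℝ) ^ (m + 2))
        - (m + 2) * (m + 1) * k * ∑ j ∈ Finset.range k, (j : ℝ) ^ (m + 1)) := by
  rw [Finset.sum_congr rfl fun π _ => abs_val m k hk π, ← Finset.mul_sum, Finset.sum_add_distrib]
  have h1 := rot_sum (m + 1) (fun c : ℕ => ((m : ℝ) + 2 - 2 * c) * bb (m + 1) k c)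
  have h2 := wsum m k
  set X := ∑ π : Equiv.Perm (Fin (m + 2)), (if π (Fin.last (m + 1) + 1) < π (Fin.last (m + 1))
            then (fun c : ℕ => ((m : ℝ) + 2 - 2 * c) * bb (m + 1) k c) (cycD (m + 1) π) else 0)
    with hX
  have h3 : ((m : ℝ) + 2) * ((∑ π : Equiv.Perm (Fin (m + 2)),
      (cycD (m + 1) π : ℝ) * bb (m + 1) k (cycD (m + 1) π)) + X)
      = 2 * ∑ π : Equiv.Perm (Fin (m + 2)), (cycD (m + 1) π : ℝ) * (m + 2 - cycD (m + 1) π)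
        * bb (m + 1) k (cycD (m + 1) π) := by
    push_cast at h1
    rw [mul_add, show ((m : ℝ) + 2) * X = (m + 1 + 1) * X by ring, h1, Finset.mul_sum,
      Finset.mul_sum, ← Finset.sum_add_distrib]
    exact Finset.sum_congr rfl fun π _ => by ring
  rw [h2] at h3
  have h4 : ((m : ℝ) + 2) ≠ 0 := by positivity
  have h5 := mul_left_cancel₀ h4 (h3.trans (mul_left_comm _ _ _))
  rw [h5]
  ring

lemma faul (p k : ℕ) : ∑ j ∈ Finset.range k, (j : ℝ) ^ p
    = ∑ i ∈ Finset.range (p + 1),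
      (bernoulli i : ℝ) * ((p + 1).choose i : ℝ) * (k : ℝ) ^ (p + 1 - i) / (p + 1) := by
  have := sum_range_pow k p
  exact_mod_cast congrArg (fun q : ℚ => (q : ℝ)) this

lemma coef (m s : ℕ) :
    (Nat.descFactorial (m + 2) (s + 1) : ℝ) / (Nat.factorial (s + 1) : ℝ)
      + (Nat.descFactorial (m + 1) (s + 1) : ℝ) / (Nat.factorial (s + 1 + 1) : ℝ)
    = ((m + 3).choose (s + 2) : ℝ) - (m + 1) / (m + 2) * ((m + 2).choose (s + 2) : ℝ) := by
  have f : ((s + 1).factorial : ℝ) ≠ 0 := by positivity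
  have hA := Nat.choose_succ_succ (m + 2) (s + 1)
  have hB := Nat.add_one_mul_choose_eq (m + 1) (s + 1)
  have hA' : ((m + 3).choose (s + 2) : ℝ)
    = ((m + 2).choose (s + 1) : ℝ) + ((m + 2).choose (s + 2) : ℝ) := by exact_mod_cast hA
  have hB' : ((m : ℝ) + 1 + 1) * ((m + 1).choose (s + 1) : ℝ)
    = ((m + 2).choose (s + 2) : ℝ) * (s + 1 + 1) := by exact_mod_cast hB
  rw [hA', Nat.descFactorial_eq_factorial_mul_choose, Nat.descFactorial_eq_factorial_mul_choose,
    Nat.factorial_succ (s + 1)]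
  push_cast
  have h2 : (s : ℝ) + 1 + 1 ≠ 0 := by positivity
  have h3 : (m : ℝ) + 2 ≠ 0 := by positivity
  field_simp
  linear_combination hB'

/-- total variation distance between `R_{k,n}` and `C_{k,n}`, third form,
in terms of Bernoulli numbers (convention `B₁ = -1/2`) and falling factorials. -/
theorem totalVariation_riffle_cutRiffle_eq_bernoulli (n k : ℕ) (hn : 2 ≤ n) (hk : 1 ≤ k) :
    (1 / 2) * ∑ π : Equiv.Perm (Fin n), |riffle k n π - cutRiffle k n π|
      = (∑ t ∈ Finset.Icc 1 (n - 2),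
          ((bernoulli (t + 1) : ℝ) / (k : ℝ) ^ t)
            * ((Nat.descFactorial n t : ℝ) / (Nat.factorial t : ℝ)
                + (Nat.descFactorial (n - 1) t : ℝ) / (Nat.factorial (t + 1) : ℝ)))
        + ((n : ℝ) + 1) * (bernoulli n : ℝ) / (k : ℝ) ^ (n - 1) := by
  obtain ⟨m, rfl⟩ : ∃ m, n = m + 2 := ⟨n - 2, by omega⟩
  have hk' : (k : ℝ) ≠ 0 := by positivity
  rw [tv_val m k hk, faul, faul, Finset.sum_range_succ, Finset.sum_range_succ',
    Finset.sum_range_succ', Finset.sum_range_succ' _ (m + 1), Finset.sum_range_succ' _ m]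
  have hI : Finset.Icc 1 (m + 2 - 2) = Finset.Ico 1 (m + 1) := by
    ext; simp only [Finset.mem_Icc, Finset.mem_Ico]; omega
  rw [hI, Finset.sum_Ico_eq_sum_range]
  simp only [show m + 2 - 1 = m + 1 from rfl, Nat.add_sub_cancel]
  set P := ∑ s ∈ Finset.range m, (bernoulli (s + 1 + 1) : ℝ) *
    ((m + 2 + 1).choose (s + 1 + 1) : ℝ) * (k : ℝ) ^ (m + 2 + 1 - (s + 1 + 1))
      / (((m + 2 : ℕ) : ℝ) + 1) with hP
  set Q := ∑ s ∈ Finset.range m, (bernoulli (s + 1 + 1) : ℝ) *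
    ((m + 1 + 1).choose (s + 1 + 1) : ℝ) * (k : ℝ) ^ (m + 1 + 1 - (s + 1 + 1))
      / (((m + 1 : ℕ) : ℝ) + 1) with hQ
  have key : ∑ s ∈ Finset.range m, ((bernoulli (1 + s + 1) : ℝ) / (k : ℝ) ^ (1 + s))
            * ((Nat.descFactorial (m + 2) (1 + s) : ℝ) / (Nat.factorial (1 + s) : ℝ)
                + (Nat.descFactorial (m + 1) (1 + s) : ℝ) / (Nat.factorial (1 + s + 1) : ℝ))
      = (1 / ((m + 2) * (k : ℝ) ^ (m + 2))) *
        ((m + 2) * (m + 3) * P - (m + 2) * (m + 1) * k * Q) := by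
    rw [hP, hQ, Finset.mul_sum, Finset.mul_sum, ← Finset.sum_sub_distrib, Finset.mul_sum]
    refine Finset.sum_congr rfl fun s hs => ?_
    have hs' := Finset.mem_range.mp hs
    obtain ⟨r, rfl⟩ : ∃ r, m = s + 1 + r := ⟨m - (s + 1), by omega⟩
    rw [add_comm 1 s, coef, show s + 1 + r + 2 + 1 - (s + 1 + 1) = r + 2 by omega,
      show s + 1 + r + 1 + 1 - (s + 1 + 1) = r + 1 by omega]
    push_cast
    have h1 : (s : ℝ) + 1 + r + 2 ≠ 0 := by positivity
    have h2 : (s : ℝ) + 1 + r + 2 + 1 ≠ 0 := by positivity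
    have h3 : (s : ℝ) + 1 + r + 1 + 1 ≠ 0 := by positivity
    field_simp
    ring
  rw [key]
  simp only [zero_add, bernoulli_zero, bernoulli_one, Nat.choose_zero_right, Nat.choose_one_right,
    Nat.sub_zero, show m + 2 + 1 - (m + 2) = 1 by omega, show (m + 2 + 1).choose (m + 2) = m + 3 by simp]
  push_cast
  have h1 : (m : ℝ) + 2 ≠ 0 := by positivity
  have h2 : (m : ℝ) + 2 + 1 ≠ 0 := by positivity
  have h3 : (m : ℝ) + 1 + 1 ≠ 0 := by positivity
  field_simp
  ring
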